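/- arXiv:1209.3547 — 10 statements merged into one kernel-verified Lean document; each statement's English description precedes it below -/
import Mathlib

section
/- The function x ↦ cos(√x) is convex on the interval [0, π²]. -/
open Real

/-!
With `t = √x`, the derivative of `g (√x)` is `(g' t / t) / 2`, so `g ∘ √` is convex as soon as
`g' t / t` is monotone. For `g = cos` this quotient is the slope at `0` of the convex function
`-sin`, which vanishes there, and slopes of a convex function from a fixed point are monotone.
-/

theorem monotoneOn_div_self_of_convexOn {𝕜 : Type*} [Field 𝕜] [LinearOrder 𝕜]
    [IsStrictOrderedRing 𝕜] {f : 𝕜 → 𝕜} {s : Set 𝕜} (hf : ConvexOn 𝕜 s f)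
    (hs : 0 ∈ s) (hf₀ : f 0 = 0) : MonotoneOn (fun t ↦ f t / t) (s \ {0}) :=
  (hf.slope_mono hs).congr fun t _ ↦ by simp only [slope_def_field, hf₀, sub_zero]

theorem hasDerivAt_comp_sqrt {g : ℝ → ℝ} {g' x : ℝ} (hx : x ≠ 0) (hg : HasDerivAt g g' (√x)) :
    HasDerivAt (fun y ↦ g (√y)) (g' / √x / 2) x :=
  (hg.comp x (hasDerivAt_sqrt hx)).congr_deriv (by ring)

theorem convexOn_comp_sqrt {g g' : ℝ → ℝ} {b : ℝ} (hb : 0 ≤ b)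
    (hg : ContinuousOn g (Set.Icc 0 b)) (hg' : ∀ t ∈ Set.Ioo 0 b, HasDerivAt g (g' t) t)
    (hmono : MonotoneOn (fun t ↦ g' t / t) (Set.Ioo 0 b)) :
    ConvexOn ℝ (Set.Icc 0 (b ^ 2)) (fun x ↦ g (√x)) := by
  have sqrt_mem_Icc : Set.MapsTo sqrt (Set.Icc 0 (b ^ 2)) (Set.Icc 0 b) :=
    fun x hx ↦ ⟨sqrt_nonneg x, sqrt_le_iff.2 ⟨hb, hx.2⟩⟩
  have sqrt_mem_Ioo : Set.MapsTo sqrt (Set.Ioo 0 (b ^ 2)) (Set.Ioo 0 b) :=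
    fun x hx ↦ ⟨sqrt_pos.2 hx.1, (sqrt_lt_sqrt hx.1.le hx.2).trans_eq (sqrt_sq hb)⟩
  have hderiv : ∀ x ∈ Set.Ioo 0 (b ^ 2),
      HasDerivAt (fun y ↦ g (√y)) (g' (√x) / √x / 2) x :=
    fun x hx ↦ hasDerivAt_comp_sqrt hx.1.ne' (hg' _ (sqrt_mem_Ioo hx))
  have hcont : ContinuousOn (fun x ↦ g (√x)) (Set.Icc 0 (b ^ 2)) :=
    hg.comp continuous_sqrt.continuousOn sqrt_mem_Icc
  apply MonotoneOn.convexOn_of_deriv (convex_Icc _ _) hcont <;> rw [interior_Icc]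
  · exact fun x hx ↦ (hderiv x hx).differentiableAt.differentiableWithinAt
  · intro x hx y hy hxy
    rw [(hderiv x hx).deriv, (hderiv y hy).deriv]
    have hquot : g' (√x) / √x ≤ g' (√y) / √y :=
      hmono (sqrt_mem_Ioo hx) (sqrt_mem_Ioo hy) (sqrt_le_sqrt hxy)
    gcongr

/-- The function `x ↦ cos (√x)` is convex on the interval `[0, π²]`. -/
theorem cos_sqrt_convexOn :
    ConvexOn ℝ (Set.Icc (0 : ℝ) (Real.pi ^ 2)) (fun x : ℝ => Real.cos (Real.sqrt x)) := by
  have convexOn_neg_sin : ConvexOn ℝ (Set.Icc 0 π) (fun t ↦ -sin t) :=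
    strictConcaveOn_sin_Icc.concaveOn.neg
  have quotient_mono : MonotoneOn (fun t ↦ -sin t / t) (Set.Icc 0 π \ {0}) :=
    monotoneOn_div_self_of_convexOn convexOn_neg_sin (Set.left_mem_Icc.2 pi_nonneg) (by simp)
  exact convexOn_comp_sqrt pi_nonneg continuousOn_cos (fun t _ ↦ hasDerivAt_cos t)
    (quotient_mono.mono fun t ht ↦ ⟨Set.Ioo_subset_Icc_self ht, ht.1.ne'⟩)
end

section
/- Let μ be a probability measure supported on the interval [-π, π]. Then ∫ cos θ dμ(θ) ≥ cos(√(∫ θ² dμ(θ))), and consequently √(∫ θ² dμ(θ)) ≥ arccos(∫ cos θ dμ(θ)). -/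
open Real MeasureTheory

/-!
The function `x ↦ cos √x` has derivative `-sinc √x / 2`, and `sinc` decreases on `[0, π]` because
`sin` is concave there; hence `cos √x` is convex on `[0, π²]`, and Jensen's inequality applied to
the variable `X²` gives the cosine bound when `|X| ≤ π`. Replacing `X` by `min |X| π` increases
neither `cos X` nor `X²`, so a bound on the second moment can take the place of the bound on `X`.
-/

lemma antitoneOn_sinc : AntitoneOn sinc (Set.Icc 0 π) := by
  intro s hs t ht hst
  rcases hs.1.eq_or_lt with rfl | hs_pos
  · exact (sinc_le_one t).trans_eq sinc_zero.symm
  have ht_pos : 0 < t := hs_pos.trans_le hst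
  have hslope : slope sin 0 t ≤ slope sin 0 s :=
    strictConcaveOn_sin_Icc.concaveOn.antitoneOn_slope_gt (Set.left_mem_Icc.2 pi_pos.le)
      ⟨hs, hs_pos⟩ ⟨ht, ht_pos⟩ hst
  simpa only [slope_def_field, sin_zero, sub_zero, ← sinc_of_ne_zero hs_pos.ne',
    ← sinc_of_ne_zero ht_pos.ne'] using hslope

lemma hasDerivAt_cos_sqrt {x : ℝ} (hx : 0 < x) :
    HasDerivAt (fun y : ℝ => cos √y) (-(sinc √x / 2)) x := by
  convert (hasDerivAt_sqrt hx.ne').cos using 1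
  rw [sinc_of_ne_zero (sqrt_pos.2 hx).ne']
  ring

lemma convexOn_cos_sqrt : ConvexOn ℝ (Set.Icc 0 (π ^ 2)) (fun x : ℝ => cos √x) := by
  refine MonotoneOn.convexOn_of_deriv (convex_Icc _ _) (by fun_prop) ?_ ?_ <;>
    rw [interior_Icc]
  · exact fun x hx => (hasDerivAt_cos_sqrt hx.1).differentiableAt.differentiableWithinAt
  · intro x hx y hy hxy
    have hmem : ∀ z ∈ Set.Ioo 0 (π ^ 2), √z ∈ Set.Icc 0 π := fun z hz =>
      ⟨sqrt_nonneg z, sqrt_le_iff.2 ⟨pi_pos.le, hz.2.le⟩⟩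
    have hsinc : sinc √y ≤ sinc √x :=
      antitoneOn_sinc (hmem x hx) (hmem y hy) (sqrt_le_sqrt hxy)
    rw [(hasDerivAt_cos_sqrt hx.1).deriv, (hasDerivAt_cos_sqrt hy.1).deriv]
    gcongr

lemma cos_min_abs_pi_le_cos (x : ℝ) : cos (min |x| π) ≤ cos x := by
  rcases le_total |x| π with hx | hx
  · rw [min_eq_left hx, cos_abs]
  · rw [min_eq_right hx, cos_pi]
    exact neg_one_le_cos x

section RandomVariable

variable {Ω : Type*} [MeasurableSpace Ω] {μ : Measure Ω} [IsProbabilityMeasure μ] {X : Ω → ℝ}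

lemma integrable_cos_comp (hX : AEMeasurable X μ) : Integrable (fun ω => cos (X ω)) μ :=
  .of_mem_Icc (-1) 1 (by fun_prop) (.of_forall fun ω => cos_mem_Icc (X ω))

lemma sqrt_integral_sq_le_of_abs_le {c : ℝ} (hXc : ∀ᵐ ω ∂μ, |X ω| ≤ c) :
    √(∫ ω, X ω ^ 2 ∂μ) ≤ c := by
  obtain ⟨ω₀, hω₀⟩ := hXc.exists
  have hsq : ∀ᵐ ω ∂μ, ‖X ω ^ 2‖ ≤ c ^ 2 := by
    filter_upwards [hXc] with ω hω
    rw [norm_pow, norm_eq_abs]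
    gcongr
  refine sqrt_le_iff.2 ⟨(abs_nonneg _).trans hω₀, (le_norm_self _).trans ?_⟩
  simpa only [probReal_univ, mul_one] using norm_integral_le_of_norm_le_const hsq

lemma cos_sqrt_integral_sq_le_integral_cos_of_abs_le_pi (hX : AEMeasurable X μ)
    (hXπ : ∀ᵐ ω ∂μ, |X ω| ≤ π) : cos √(∫ ω, X ω ^ 2 ∂μ) ≤ ∫ ω, cos (X ω) ∂μ := by
  have hcos : ∀ x : ℝ, cos √(x ^ 2) = cos x := fun x => by rw [sqrt_sq_eq_abs, cos_abs]
  have hsq : ∀ᵐ ω ∂μ, X ω ^ 2 ∈ Set.Icc 0 (π ^ 2) :=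
    hXπ.mono fun ω hω => ⟨sq_nonneg _, sq_le_sq' (abs_le.1 hω).1 (abs_le.1 hω).2⟩
  simpa only [hcos] using convexOn_cos_sqrt.map_integral_le (by fun_prop) isClosed_Icc hsq
    (.of_mem_Icc 0 (π ^ 2) (by fun_prop) hsq)
    (by simpa only [Function.comp_def, hcos] using integrable_cos_comp hX)

lemma cos_min_sqrt_integral_sq_pi_le_integral_cos (hX : MemLp X 2 μ) :
    cos (min √(∫ ω, X ω ^ 2 ∂μ) π) ≤ ∫ ω, cos (X ω) ∂μ := by
  have hX_meas : AEMeasurable X μ := hX.aestronglyMeasurable.aemeasurable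
  let Y : Ω → ℝ := fun ω => min |X ω| π
  have hY_meas : AEMeasurable Y μ := hX_meas.abs.min aemeasurable_const
  have hY_nonneg : ∀ ω, 0 ≤ Y ω := fun ω => le_min (abs_nonneg _) pi_pos.le
  have hY_le_pi : ∀ᵐ ω ∂μ, |Y ω| ≤ π :=
    .of_forall fun ω => (abs_of_nonneg (hY_nonneg ω)).trans_le (min_le_right _ _)
  have hY_sq_le : ∀ ω, Y ω ^ 2 ≤ X ω ^ 2 := fun ω =>
    (pow_le_pow_left₀ (hY_nonneg ω) (min_le_left _ _) 2).trans_eq (sq_abs _)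
  have hmoment : ∫ ω, Y ω ^ 2 ∂μ ≤ ∫ ω, X ω ^ 2 ∂μ :=
    integral_mono_of_nonneg (.of_forall fun ω => sq_nonneg _) hX.integrable_sq
      (.of_forall hY_sq_le)
  calc cos (min √(∫ ω, X ω ^ 2 ∂μ) π)
      ≤ cos √(∫ ω, Y ω ^ 2 ∂μ) :=
        cos_le_cos_of_nonneg_of_le_pi (sqrt_nonneg _) (min_le_right _ _)
          (le_min (sqrt_le_sqrt hmoment) (sqrt_integral_sq_le_of_abs_le hY_le_pi))
    _ ≤ ∫ ω, cos (Y ω) ∂μ := cos_sqrt_integral_sq_le_integral_cos_of_abs_le_pi hY_meas hY_le_pi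
    _ ≤ ∫ ω, cos (X ω) ∂μ :=
        integral_mono (integrable_cos_comp hY_meas) (integrable_cos_comp hX_meas)
          fun ω => cos_min_abs_pi_le_cos (X ω)

theorem integral_cos_ge_cos_sqrt_integral_sq_general (hX : MemLp X 2 μ) :
    (∫ ω, cos (X ω) ∂μ) ≥ cos (min √(∫ ω, X ω ^ 2 ∂μ) π) ∧
      √(∫ ω, X ω ^ 2 ∂μ) ≥ arccos (∫ ω, cos (X ω) ∂μ) := by
  have hcos := cos_min_sqrt_integral_sq_pi_le_integral_cos hX
  refine ⟨hcos, ?_⟩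
  calc arccos (∫ ω, cos (X ω) ∂μ)
      ≤ arccos (cos (min √(∫ ω, X ω ^ 2 ∂μ) π)) := arccos_le_arccos hcos
    _ = min √(∫ ω, X ω ^ 2 ∂μ) π :=
        arccos_cos (le_min (sqrt_nonneg _) pi_pos.le) (min_le_right _ _)
    _ ≤ √(∫ ω, X ω ^ 2 ∂μ) := min_le_left _ _

end RandomVariable

/-- For a probability measure `μ` supported on `[-π, π]`:
`∫ cos θ dμ ≥ cos (√(∫ θ² dμ))`, and consequently
`√(∫ θ² dμ) ≥ arccos (∫ cos θ dμ)`. -/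
theorem integral_cos_ge_cos_sqrt_integral_sq (μ : Measure ℝ) [IsProbabilityMeasure μ]
    (hsupp : ∀ᵐ θ ∂μ, θ ∈ Set.Icc (-Real.pi) Real.pi) :
    (∫ θ, Real.cos θ ∂μ) ≥ Real.cos (Real.sqrt (∫ θ, θ ^ 2 ∂μ)) ∧
      Real.sqrt (∫ θ, θ ^ 2 ∂μ) ≥ Real.arccos (∫ θ, Real.cos θ ∂μ) := by
  have hrms : √(∫ θ, θ ^ 2 ∂μ) ≤ π := sqrt_integral_sq_le_of_abs_le (hsupp.mono fun _ => abs_le.2)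
  simpa only [min_eq_left hrms] using integral_cos_ge_cos_sqrt_integral_sq_general
    (memLp_of_bounded hsupp aestronglyMeasurable_id 2)
end

section
/- For every real θ with -π ≤ θ ≤ π, one has 5/2 - (8/3)·cos θ + (1/6)·cos(2θ) ≤ θ². -/
open Real

/-!
The second derivative of `θ² - f₂(θ)` is the perfect square `(4/3)(1 - cos θ)²`, so this function is
convex on `ℝ`. Its derivative vanishes at `0`, hence it is minimized there, with value `0`.
-/

/-- The paper's trigonometric polynomial `f₂`, a finite-Fourier lower bound for `θ ↦ θ²`. -/
noncomputable def f2 (θ : ℝ) : ℝ :=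
  5 / 2 - (8 / 3) * cos θ + (1 / 6) * cos (2 * θ)

theorem isMinOn_of_convexOn_of_hasDerivAt_zero {s : Set ℝ} {f : ℝ → ℝ} {x : ℝ}
    (hf : ConvexOn ℝ s f) (hx : x ∈ interior s) (hfx : HasDerivAt f 0 x) : IsMinOn f s x :=
  hf.isMinOn_of_rightDeriv_eq_zero hx
    (hfx.hasDerivWithinAt.derivWithin (uniqueDiffWithinAt_Ioi x))

theorem hasDerivAt_sq_sub_f2 (θ : ℝ) :
    HasDerivAt (fun t ↦ t ^ 2 - f2 t) (2 * θ - ((8 / 3) * sin θ - (1 / 3) * sin (2 * θ))) θ := by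
  have hcos_two_mul : HasDerivAt (fun t ↦ cos (2 * t)) (-sin (2 * θ) * 2) θ :=
    (hasDerivAt_const_mul 2).cos
  refine ((hasDerivAt_pow 2 θ).sub ((((hasDerivAt_cos θ).const_mul (8 / 3)).const_sub
    (5 / 2)).add (hcos_two_mul.const_mul (1 / 6)))).congr_deriv ?_
  push_cast
  ring

theorem hasDerivAt_deriv_sq_sub_f2 (θ : ℝ) :
    HasDerivAt (fun t ↦ 2 * t - ((8 / 3) * sin t - (1 / 3) * sin (2 * t)))
      ((4 / 3) * (1 - cos θ) ^ 2) θ := by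
  have hsin_two_mul : HasDerivAt (fun t ↦ sin (2 * t)) (cos (2 * θ) * 2) θ :=
    (hasDerivAt_const_mul 2).sin
  refine ((hasDerivAt_const_mul 2).sub (((hasDerivAt_sin θ).const_mul (8 / 3)).sub
    (hsin_two_mul.const_mul (1 / 3)))).congr_deriv ?_
  rw [cos_two_mul]
  ring

theorem convexOn_sq_sub_f2 : ConvexOn ℝ Set.univ fun θ ↦ θ ^ 2 - f2 θ :=
  convexOn_of_hasDerivWithinAt2_nonneg convex_univ
    (fun θ _ ↦ (hasDerivAt_sq_sub_f2 θ).continuousAt.continuousWithinAt)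
    (fun θ _ ↦ (hasDerivAt_sq_sub_f2 θ).hasDerivWithinAt)
    (fun θ _ ↦ (hasDerivAt_deriv_sq_sub_f2 θ).hasDerivWithinAt)
    fun θ _ ↦ by positivity

theorem f2_zero : f2 0 = 0 := by
  norm_num [f2]

theorem f2_le_sq_general (θ : ℝ) : f2 θ ≤ θ ^ 2 := by
  have hcrit : HasDerivAt (fun t ↦ t ^ 2 - f2 t) 0 0 := by
    simpa using hasDerivAt_sq_sub_f2 0
  have hmin : IsMinOn (fun t ↦ t ^ 2 - f2 t) Set.univ 0 :=
    isMinOn_of_convexOn_of_hasDerivAt_zero convexOn_sq_sub_f2 (by simp) hcrit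
  have hle : 0 ^ 2 - f2 0 ≤ θ ^ 2 - f2 θ := hmin (Set.mem_univ θ)
  rw [f2_zero] at hle
  linarith

/-- For every real `θ` with `-π ≤ θ ≤ π`, one has
`5/2 - (8/3)·cos θ + (1/6)·cos (2θ) ≤ θ²`. -/
theorem f2_le_sq (θ : ℝ) (h1 : -Real.pi ≤ θ) (h2 : θ ≤ Real.pi) :
    5 / 2 - (8 / 3) * Real.cos θ + (1 / 6) * Real.cos (2 * θ) ≤ θ ^ 2 :=
  f2_le_sq_general θ
end

section
/- For every real θ with -π ≤ θ ≤ π, one has θ² ≤ (π²/2)·(1 - cos θ) - (π²/4 - 1)·(1 - cos(2θ))/2. -/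
open Real

/-!
Half-angle formulas turn the right-hand side into `4 s ^ 2 + (π ^ 2 - 4) s ^ 4` with
`s = sin (θ / 2)`. The ratio `(x ^ 2 - sin x ^ 2) / sin x ^ 4` is increasing on `(0, π)`, so on
`(0, π / 2]` it is at most its value `π ^ 2 / 4 - 1` at `π / 2`; this is the claim at `x = |θ| / 2`.

With `q = sin x / x ∈ [0, 1]`, the derivative of the ratio has the sign of
`q - (2 - q ^ 2) * cos x`. By the Mitrinović–Adamović inequality `cos x ≤ q ^ 3`, this is at least
`q - (2 - q ^ 2) * q ^ 3 = q * (q ^ 2 - 1) ^ 2`.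
-/

lemma sq_sub_pow_four_div_three_le_sin_sq (x : ℝ) : x ^ 2 - x ^ 4 / 3 ≤ sin x ^ 2 := by
  wlog hx : 0 ≤ x generalizing x
  · simpa [Even.neg_pow (by decide : Even 4)] using this (-x) (by linarith)
  rcases le_total (x ^ 2) 3 with hx₃ | hx₃
  · have hcube : 0 ≤ x - x ^ 3 / 6 := by
      have : 0 ≤ x * (6 - x ^ 2) := mul_nonneg hx (by linarith)
      linarith
    calc x ^ 2 - x ^ 4 / 3 ≤ x ^ 2 - x ^ 4 / 3 + (x ^ 3 / 6) ^ 2 :=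
          le_add_of_nonneg_right (sq_nonneg _)
      _ = (x - x ^ 3 / 6) ^ 2 := by ring
      _ ≤ sin x ^ 2 := by gcongr; exact sin_ge_sub_cube hx
  · calc x ^ 2 - x ^ 4 / 3 = x ^ 2 * (3 - x ^ 2) / 3 := by ring
      _ ≤ 0 := by
        have := mul_nonneg (sq_nonneg x) (sub_nonneg.2 hx₃)
        linarith
      _ ≤ sin x ^ 2 := sq_nonneg _

lemma cos_eq_one_sub_two_mul_sin_half_sq (x : ℝ) : cos x = 1 - 2 * sin (x / 2) ^ 2 := by
  rw [← cos_two_mul_eq_one_sub, mul_div_cancel₀ x two_ne_zero]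

lemma cos_le_one_sub_sq_div_two_add_pow_four_div (x : ℝ) :
    cos x ≤ 1 - x ^ 2 / 2 + x ^ 4 / 24 := by
  rw [cos_eq_one_sub_two_mul_sin_half_sq]
  linarith [sq_sub_pow_four_div_three_le_sin_sq (x / 2)]

/-- The Mitrinović–Adamović inequality `cos x ≤ (sin x / x) ^ 3`. -/
lemma pow_three_mul_cos_le_sin_pow_three {x : ℝ} (hx₀ : 0 ≤ x) (hxπ : x ≤ π) :
    x ^ 3 * cos x ≤ sin x ^ 3 := by
  rcases le_total x (π / 2) with hx | hx
  · have hx₂ : x ^ 2 ≤ 4 := by nlinarith [pi_le_four]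
    have hcos : cos x ≤ (1 - x ^ 2 / 6) ^ 3 := by
      have : 0 ≤ x ^ 4 * (9 - x ^ 2) := mul_nonneg (by positivity) (by linarith)
      linarith [cos_le_one_sub_sq_div_two_add_pow_four_div x]
    have hsin : x * (1 - x ^ 2 / 6) ≤ sin x := by linarith [sin_ge_sub_cube hx₀]
    calc x ^ 3 * cos x ≤ x ^ 3 * (1 - x ^ 2 / 6) ^ 3 := by gcongr
      _ = (x * (1 - x ^ 2 / 6)) ^ 3 := by ring
      _ ≤ sin x ^ 3 := pow_le_pow_left₀ (mul_nonneg hx₀ (by linarith)) hsin 3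
  · calc x ^ 3 * cos x ≤ 0 := mul_nonpos_of_nonneg_of_nonpos (by positivity)
          (cos_nonpos_of_pi_div_two_le_of_le hx (by linarith [pi_pos]))
      _ ≤ sin x ^ 3 := pow_nonneg (sin_nonneg_of_nonneg_of_le_pi hx₀ hxπ) 3

/-- On `(0, π / 2)` this is Wilker's inequality `2 ≤ tan x / x + (sin x / x) ^ 2`, multiplied by
`x ^ 2 * cos x`. -/
lemma two_mul_sq_mul_cos_le {x : ℝ} (hx₀ : 0 ≤ x) (hxπ : x ≤ π) :
    2 * x ^ 2 * cos x ≤ x * sin x + sin x ^ 2 * cos x := by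
  rcases hx₀.eq_or_lt with rfl | hx
  · simp
  have hsin : 0 ≤ sin x := sin_nonneg_of_nonneg_of_le_pi hx₀ hxπ
  have hfactor : 0 ≤ 2 * x ^ 2 - sin x ^ 2 := by linarith [sin_sq_le_sq (x := x), sq_nonneg x]
  have hscaled : x ^ 3 * ((2 * x ^ 2 - sin x ^ 2) * cos x) ≤ x ^ 3 * (x * sin x) :=
    calc x ^ 3 * ((2 * x ^ 2 - sin x ^ 2) * cos x)
        = (2 * x ^ 2 - sin x ^ 2) * (x ^ 3 * cos x) := by ring
      _ ≤ (2 * x ^ 2 - sin x ^ 2) * sin x ^ 3 := by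
        gcongr
        exact pow_three_mul_cos_le_sin_pow_three hx₀ hxπ
      _ = x ^ 3 * (x * sin x) - sin x * (x ^ 2 - sin x ^ 2) ^ 2 := by ring
      _ ≤ x ^ 3 * (x * sin x) := sub_le_self _ (by positivity)
  linarith [le_of_mul_le_mul_left hscaled (by positivity)]

lemma hasDerivAt_sq_sub_sin_sq_div_sin_pow_four {x : ℝ} (hx : sin x ≠ 0) :
    HasDerivAt (fun y : ℝ ↦ (y ^ 2 - sin y ^ 2) / sin y ^ 4)
      (2 * (x * sin x + sin x ^ 2 * cos x - 2 * x ^ 2 * cos x) / sin x ^ 5) x := by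
  refine (((hasDerivAt_pow 2 x).sub ((hasDerivAt_sin x).pow 2)).div
    ((hasDerivAt_sin x).pow 4) (pow_ne_zero 4 hx)).congr_deriv ?_
  simp only [Pi.sub_apply, Pi.pow_apply]
  field_simp
  push_cast
  ring

lemma monotoneOn_sq_sub_sin_sq_div_sin_pow_four :
    MonotoneOn (fun x : ℝ ↦ (x ^ 2 - sin x ^ 2) / sin x ^ 4) (Set.Ioo 0 π) := by
  have hderiv {x : ℝ} (hx : x ∈ Set.Ioo 0 π) :=
    hasDerivAt_sq_sub_sin_sq_div_sin_pow_four (sin_pos_of_mem_Ioo hx).ne'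
  refine monotoneOn_of_hasDerivWithinAt_nonneg (convex_Ioo 0 π)
    (fun x hx ↦ (hderiv hx).continuousAt.continuousWithinAt)
    (fun x hx ↦ (hderiv (interior_subset hx)).hasDerivWithinAt) fun x hx ↦ ?_
  have hx := interior_subset hx
  have hsin : 0 < sin x := sin_pos_of_mem_Ioo hx
  have hwilker := sub_nonneg.2 (two_mul_sq_mul_cos_le hx.1.le hx.2.le)
  positivity

lemma sq_le_sin_sq_add_mul_sin_pow_four {x a : ℝ} (hxa : |x| ≤ a) (ha : a < π) :
    x ^ 2 ≤ sin x ^ 2 + (a ^ 2 - sin a ^ 2) / sin a ^ 4 * sin x ^ 4 := by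
  wlog hx : 0 ≤ x generalizing x
  · simpa [Even.neg_pow (by decide : Even 4)] using this (x := -x) (by simpa) (by linarith)
  rcases hx.eq_or_lt with rfl | hx₀
  · simp
  rw [abs_of_nonneg hx] at hxa
  have hxπ : x ∈ Set.Ioo 0 π := ⟨hx₀, hxa.trans_lt ha⟩
  have hsin : 0 < sin x ^ 4 := pow_pos (sin_pos_of_mem_Ioo hxπ) 4
  have hratio :=
    monotoneOn_sq_sub_sin_sq_div_sin_pow_four hxπ ⟨hx₀.trans_le hxa, ha⟩ hxa
  linarith [(div_le_iff₀ hsin).1 hratio]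

/-- For every real `θ` with `-π ≤ θ ≤ π`, one has
`θ² ≤ (π²/2)·(1 - cos θ) - (π²/4 - 1)·(1 - cos (2θ))/2`. -/
theorem sq_le_f3 (θ : ℝ) (h1 : -Real.pi ≤ θ) (h2 : θ ≤ Real.pi) :
    θ ^ 2 ≤ Real.pi ^ 2 / 2 * (1 - Real.cos θ)
      - (Real.pi ^ 2 / 4 - 1) * (1 - Real.cos (2 * θ)) / 2 := by
  have hhalf : |θ / 2| ≤ π / 2 := abs_le.2 ⟨by linarith, by linarith⟩
  have hbound : (θ / 2) ^ 2 ≤ sin (θ / 2) ^ 2 + ((π / 2) ^ 2 - 1) * sin (θ / 2) ^ 4 := by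
    simpa using sq_le_sin_sq_add_mul_sin_pow_four hhalf (by linarith [pi_pos])
  rw [cos_two_mul, cos_eq_one_sub_two_mul_sin_half_sq θ]
  linarith
end

section
/- Let p : ℕ → ℝ be a probability distribution (p_n ≥ 0, ∑_{n=0}^{∞} p_n = 1) whose mean μ := ∑_{n=0}^{∞} n·p_n is finite. Then the Shannon entropy H(p) := -∑_{n=0}^{∞} p_n ln p_n satisfies H(p) < ln(μ+1) + 1. -/
open Real

/-! Any energy `E` on the index set bounds the entropy of `p` by `∑ E p + log ∑ exp (-E)`, with
equality for the Gibbs weights `exp (-E) / ∑ exp (-E)`. For `E n = β (n + 1)` the partition function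
is `1 / (exp β - 1) < 1 / β`, so that `H(p) < β (μ + 1) - log β` for every `β > 0`; the right-hand
side is smallest at `β = 1 / (μ + 1)`, where it equals `1 + log (μ + 1)`. -/

/-- The Fenchel-Young inequality for the convex conjugates `x * log x - x` and `exp`. -/
lemma negMulLog_le_mul_add_exp_neg_sub {x : ℝ} (hx : 0 ≤ x) (e : ℝ) :
    negMulLog x ≤ x * e + exp (-e) - x := by
  rcases hx.eq_or_lt with rfl | hx
  · simpa using (exp_pos (-e)).le
  · have htangent : x * (-e - log x + 1) ≤ exp (-e) := calc
      x * (-e - log x + 1) ≤ x * exp (-e - log x) := by gcongr; exact add_one_le_exp _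
      _ = exp (-e) := by rw [exp_sub, exp_log hx, mul_div_cancel₀ _ hx.ne']
    rw [negMulLog]
    linarith

section GibbsVariationalPrinciple

variable {ι : Type*} {p E : ι → ℝ}

lemma summable_negMulLog_of_summable_mul_of_summable_exp_neg (hp₀ : ∀ i, 0 ≤ p i)
    (hp₁ : ∀ i, p i ≤ 1) (hE : Summable fun i ↦ p i * E i) (hZ : Summable fun i ↦ exp (-E i)) :
    Summable fun i ↦ negMulLog (p i) :=
  .of_nonneg_of_le (fun i ↦ negMulLog_nonneg (hp₀ i) (hp₁ i))
    (fun i ↦ (negMulLog_le_mul_add_exp_neg_sub (hp₀ i) (E i)).trans (sub_le_self _ (hp₀ i)))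
    (hE.add hZ)

theorem tsum_negMulLog_le_add_log {U Z : ℝ} (hp : ∀ i, 0 ≤ p i) (hsum : HasSum p 1)
    (hU : HasSum (fun i ↦ p i * E i) U) (hZ : HasSum (fun i ↦ exp (-E i)) Z) :
    ∑' i, negMulLog (p i) ≤ U + log Z := by
  have hentropy : Summable fun i ↦ negMulLog (p i) :=
    summable_negMulLog_of_summable_mul_of_summable_exp_neg hp
      (fun i ↦ le_hasSum hsum i fun j _ ↦ hp j) hU.summable hZ.summable
  have hZpos : 0 < Z := by
    obtain ⟨i⟩ : Nonempty ι := by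
      by_contra! hι
      exact one_ne_zero (hsum.unique hasSum_empty)
    exact (exp_pos _).trans_le (le_hasSum hZ i fun j _ ↦ (exp_pos _).le)
  have hweight (i : ι) : exp (-(E i + log Z)) = exp (-E i) / Z := by
    rw [neg_add, exp_add, exp_neg (log Z), exp_log hZpos, div_eq_mul_inv]
  have hgibbs (i : ι) : negMulLog (p i) ≤ p i * E i + p i * log Z + exp (-E i) / Z - p i := by
    rw [← mul_add, ← hweight]
    exact negMulLog_le_mul_add_exp_neg_sub (hp i) _
  calc ∑' i, negMulLog (p i)
      ≤ U + 1 * log Z + Z / Z - 1 := hasSum_le hgibbs hentropy.hasSum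
        (((hU.add (hsum.mul_right (log Z))).add (hZ.div_const Z)).sub hsum)
    _ = U + log Z := by rw [div_self hZpos.ne']; ring

end GibbsVariationalPrinciple

lemma hasSum_exp_neg_mul_succ {β : ℝ} (hβ : 0 < β) :
    HasSum (fun n : ℕ ↦ exp (-(β * (n + 1)))) (exp β - 1)⁻¹ := by
  have hgeom := (hasSum_geometric_of_lt_one (exp_pos (-β)).le
    (exp_lt_one_iff.mpr (neg_lt_zero.mpr hβ))).mul_left (exp (-β))
  have hvalue : exp (-β) * (1 - exp (-β))⁻¹ = (exp β - 1)⁻¹ := by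
    rw [exp_neg, ← mul_inv, mul_sub, mul_one, mul_inv_cancel₀ (exp_ne_zero β)]
  rw [← hvalue]
  refine hgeom.congr_fun fun n ↦ ?_
  rw [← exp_nat_mul, ← exp_add]
  ring_nf

lemma tsum_negMulLog_lt_mul_sub_log {p : ℕ → ℝ} {μ β : ℝ} (hp : ∀ n, 0 ≤ p n) (hsum : HasSum p 1)
    (hμ : HasSum (fun n : ℕ ↦ (n : ℝ) * p n) μ) (hβ : 0 < β) :
    ∑' n, negMulLog (p n) < β * (μ + 1) - log β := by
  have henergy : HasSum (fun n : ℕ ↦ p n * (β * (n + 1))) (β * (μ + 1)) :=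
    ((hμ.add hsum).mul_left β).congr_fun fun n ↦ by ring
  calc ∑' n, negMulLog (p n)
      ≤ β * (μ + 1) + log (exp β - 1)⁻¹ :=
        tsum_negMulLog_le_add_log hp hsum henergy (hasSum_exp_neg_mul_succ hβ)
    _ = β * (μ + 1) - log (exp β - 1) := by rw [log_inv, ← sub_eq_add_neg]
    _ < β * (μ + 1) - log β := by
        gcongr
        exact lt_sub_iff_add_lt.mpr (add_one_lt_exp hβ.ne')

/-- For a probability distribution `p` on `ℕ` with finite mean `μ`, the Shannon entropy
satisfies `H(p) < ln(μ+1) + 1`.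
(The convention `0·ln 0 = 0` holds automatically since `Real.log 0 = 0`.) -/
theorem entropy_lt_log_mean_add_one (p : ℕ → ℝ) (hp : ∀ n, 0 ≤ p n) (hsum : HasSum p 1)
    (μ : ℝ) (hμ : HasSum (fun n : ℕ => (n : ℝ) * p n) μ) :
    (-∑' n : ℕ, p n * Real.log (p n)) < Real.log (μ + 1) + 1 := by
  have hμ_nonneg : 0 ≤ μ := hμ.nonneg fun n ↦ mul_nonneg n.cast_nonneg (hp n)
  have hμ_pos : 0 < μ + 1 := by linarith
  calc -∑' n, p n * log (p n)
      = ∑' n, negMulLog (p n) := by simp only [negMulLog_eq_neg, tsum_neg]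
    _ < (μ + 1)⁻¹ * (μ + 1) - log (μ + 1)⁻¹ :=
        tsum_negMulLog_lt_mul_sub_log hp hsum hμ (inv_pos.mpr hμ_pos)
    _ = log (μ + 1) + 1 := by rw [inv_mul_cancel₀ hμ_pos.ne', log_inv]; ring
end

section
/- Let p : ℤ → ℝ be a probability distribution (p_n ≥ 0, ∑_{n∈ℤ} p_n = 1), let g be any real number, and suppose M := ∑_{n∈ℤ} |n - g|·p_n is finite. Then the Shannon entropy H(p) := -∑_{n∈ℤ} p_n ln p_n satisfies H(p) < ln(2M + 1) + 1. -/
open Real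

/-!
By Gibbs' inequality the entropy of `p` is at most its cross entropy relative to the two-sided
exponential law `q n = exp (-β |n - g|) / Z`, which is `β M + log Z`. Split at `g`, the sum `Z`
consists of two geometric series of ratio `exp (-β)` whose first terms `a, b ≤ 1` satisfy
`a b = exp (-β)`; hence `a + b ≤ 1 + exp (-β)` and `Z ≤ 1 + 2 / (exp β - 1) < 1 + 2 / β`. The choice
`β = 2 / (2 M + 1)`, rather than the more obvious `1 / M`, also covers `M = 0`.
-/

section Gibbs

variable {ι : Type*} {p q v : ι → ℝ} {C E : ℝ}

lemma negMulLog_le_neg_mul_log_add_sub {x y : ℝ} (hx : 0 ≤ x) (hy : 0 ≤ y)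
    (hxy : y = 0 → x = 0) : negMulLog x ≤ -(x * log y) + (y - x) := by
  rcases hx.eq_or_lt with rfl | hx
  · simpa using hy
  · have hy : 0 < y := hy.lt_of_ne' fun h => hx.ne' (hxy h)
    have hlog : x * log (y / x) ≤ x * (y / x - 1) :=
      mul_le_mul_of_nonneg_left (log_le_sub_one_of_pos (div_pos hy hx)) hx.le
    rw [log_div hy.ne' hx.ne', mul_sub, mul_sub, mul_div_cancel₀ _ hx.ne'] at hlog
    rw [negMulLog]
    linarith

lemma tsum_negMulLog_le_crossEntropy (hp : ∀ n, 0 ≤ p n) (hp_sum : HasSum p 1)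
    (hq : ∀ n, 0 ≤ q n) (hq_sum : HasSum q 1) (hpq : ∀ n, q n = 0 → p n = 0)
    (hC : HasSum (fun n => -(p n * log (q n))) C) :
    ∑' n, negMulLog (p n) ≤ C := by
  have hbound : HasSum (fun n => -(p n * log (q n)) + (q n - p n)) C := by
    simpa using hC.add (hq_sum.sub hp_sum)
  have hle (n) : negMulLog (p n) ≤ -(p n * log (q n)) + (q n - p n) :=
    negMulLog_le_neg_mul_log_add_sub (hp n) (hq n) (hpq n)
  have hnonneg (n) : 0 ≤ negMulLog (p n) :=
    negMulLog_nonneg (hp n) (le_hasSum hp_sum n fun m _ => hp m)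
  exact hasSum_le hle (Summable.of_nonneg_of_le hnonneg hle hbound.summable).hasSum hbound

lemma tsum_negMulLog_le_add_log_tsum_exp (hp : ∀ n, 0 ≤ p n) (hp_sum : HasSum p 1)
    (hE : HasSum (fun n => v n * p n) E) (hv : Summable fun n => exp (-v n)) :
    ∑' n, negMulLog (p n) ≤ E + log (∑' n, exp (-v n)) := by
  set Z := ∑' n, exp (-v n)
  obtain ⟨i⟩ : Nonempty ι := by
    by_contra! hι
    exact zero_ne_one (hasSum_empty.unique hp_sum)
  have hZ : 0 < Z := hv.tsum_pos (fun n => (exp_pos _).le) i (exp_pos _)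
  have hq (n) : 0 < exp (-v n) / Z := div_pos (exp_pos _) hZ
  have hq_sum : HasSum (fun n => exp (-v n) / Z) 1 := by
    rw [← div_self hZ.ne']
    exact hv.hasSum.div_const Z
  have hcross : HasSum (fun n => -(p n * log (exp (-v n) / Z))) (E + log Z) := by
    convert hE.add (hp_sum.mul_right (log Z)) using 2 with n
    · rw [log_div (exp_pos _).ne' hZ.ne', log_exp]
      ring
    · rw [one_mul]
  exact tsum_negMulLog_le_crossEntropy hp hp_sum (fun n => (hq n).le) hq_sum
    (fun n h => absurd h (hq n).ne') hcross

end Gibbs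

section Partition

variable {β x : ℝ}

lemma hasSum_exp_neg_mul_natCast_add (hβ : 0 < β) (x : ℝ) :
    HasSum (fun n : ℕ => exp (-(β * (n + x)))) (exp (-(β * x)) / (1 - exp (-β))) := by
  have hgeom := hasSum_geometric_of_lt_one (exp_pos (-β)).le (exp_lt_one_iff.2 (neg_lt_zero.2 hβ))
  refine (hgeom.mul_left (exp (-(β * x)))).congr_fun fun n => ?_
  rw [← exp_nat_mul, ← exp_add]
  ring_nf

lemma hasSum_exp_neg_mul_abs_intCast_add (hβ : 0 < β) (hx₀ : 0 ≤ x) (hx₁ : x ≤ 1) :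
    HasSum (fun n : ℤ => exp (-(β * |n + x|)))
      ((exp (-(β * x)) + exp (-(β * (1 - x)))) / (1 - exp (-β))) := by
  rw [add_div]
  apply HasSum.of_nat_of_neg_add_one
  · refine (hasSum_exp_neg_mul_natCast_add hβ x).congr_fun fun n => ?_
    rw [Int.cast_natCast, abs_of_nonneg (by positivity)]
  · refine (hasSum_exp_neg_mul_natCast_add hβ (1 - x)).congr_fun fun n => ?_
    have habs : |((-(n + 1 : ℤ) : ℤ) : ℝ) + x| = n + (1 - x) := by
      rw [← abs_of_nonneg (add_nonneg n.cast_nonneg (sub_nonneg.2 hx₁)), ← abs_neg]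
      push_cast
      ring_nf
    rw [habs]

lemma hasSum_exp_neg_mul_abs_intCast_sub (hβ : 0 < β) (g : ℝ) :
    HasSum (fun n : ℤ => exp (-(β * |n - g|)))
      ((exp (-(β * (⌈g⌉ - g))) + exp (-(β * (1 - (⌈g⌉ - g))))) / (1 - exp (-β))) := by
  rw [← (Equiv.addRight ⌈g⌉).hasSum_iff]
  refine (hasSum_exp_neg_mul_abs_intCast_add hβ (sub_nonneg.2 (Int.le_ceil g))
    (sub_le_iff_le_add'.2 (Int.ceil_lt_add_one g).le)).congr_fun fun n => ?_
  simp only [Function.comp_apply, Equiv.coe_addRight, Int.cast_add, add_sub_assoc]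

lemma exp_neg_mul_add_exp_neg_mul_one_sub_le (hβ : 0 ≤ β) (hx₀ : 0 ≤ x) (hx₁ : x ≤ 1) :
    exp (-(β * x)) + exp (-(β * (1 - x))) ≤ 1 + exp (-β) := by
  have hmul : exp (-(β * x)) * exp (-(β * (1 - x))) = exp (-β) := by
    rw [← exp_add]
    ring_nf
  have ha : exp (-(β * x)) ≤ 1 := exp_le_one_iff.2 (neg_nonpos.2 (mul_nonneg hβ hx₀))
  have hb : exp (-(β * (1 - x))) ≤ 1 :=
    exp_le_one_iff.2 (neg_nonpos.2 (mul_nonneg hβ (sub_nonneg.2 hx₁)))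
  linarith [mul_nonneg (sub_nonneg.2 ha) (sub_nonneg.2 hb)]

lemma tsum_exp_neg_mul_abs_intCast_sub_le (hβ : 0 < β) (g : ℝ) :
    ∑' n : ℤ, exp (-(β * |n - g|)) ≤ 1 + 2 / (exp β - 1) := by
  have hexp : 0 < exp β - 1 := sub_pos.2 (one_lt_exp_iff.2 hβ)
  have hexp_neg : 0 < 1 - exp (-β) := sub_pos.2 (exp_lt_one_iff.2 (neg_lt_zero.2 hβ))
  calc ∑' n : ℤ, exp (-(β * |n - g|))
      = (exp (-(β * (⌈g⌉ - g))) + exp (-(β * (1 - (⌈g⌉ - g))))) / (1 - exp (-β)) :=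
        (hasSum_exp_neg_mul_abs_intCast_sub hβ g).tsum_eq
    _ ≤ (1 + exp (-β)) / (1 - exp (-β)) :=
        div_le_div_of_nonneg_right (exp_neg_mul_add_exp_neg_mul_one_sub_le hβ.le
          (sub_nonneg.2 (Int.le_ceil g)) (sub_le_iff_le_add'.2 (Int.ceil_lt_add_one g).le))
          hexp_neg.le
    _ = 1 + 2 / (exp β - 1) := by
        rw [exp_neg] at hexp_neg ⊢
        field_simp
        ring

lemma tsum_exp_neg_mul_abs_intCast_sub_lt (hβ : 0 < β) (g : ℝ) :
    ∑' n : ℤ, exp (-(β * |n - g|)) < 1 + 2 / β := by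
  refine (tsum_exp_neg_mul_abs_intCast_sub_le hβ g).trans_lt ?_
  gcongr
  exact lt_sub_iff_add_lt.2 (add_one_lt_exp hβ.ne')

end Partition

lemma tsum_negMulLog_lt_mul_add_log_one_add_two_div {p : ℤ → ℝ} (hp : ∀ n, 0 ≤ p n)
    (hsum : HasSum p 1) {g M β : ℝ} (hM : HasSum (fun n : ℤ => |n - g| * p n) M) (hβ : 0 < β) :
    ∑' n, negMulLog (p n) < β * M + log (1 + 2 / β) := by
  have hZ := hasSum_exp_neg_mul_abs_intCast_sub hβ g
  have hZ_pos : 0 < ∑' n : ℤ, exp (-(β * |n - g|)) :=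
    hZ.summable.tsum_pos (fun n => (exp_pos _).le) 0 (exp_pos _)
  have hE : HasSum (fun n : ℤ => β * |n - g| * p n) (β * M) := by
    simpa only [mul_assoc] using hM.mul_left β
  calc ∑' n, negMulLog (p n)
      ≤ β * M + log (∑' n : ℤ, exp (-(β * |n - g|))) :=
        tsum_negMulLog_le_add_log_tsum_exp hp hsum hE hZ.summable
    _ < β * M + log (1 + 2 / β) := by
        gcongr
        exact tsum_exp_neg_mul_abs_intCast_sub_lt hβ g

lemma log_one_add_le_log_add_one_div {t : ℝ} (ht : 0 < t) : log (1 + t) ≤ log t + 1 / t := by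
  have h := log_le_sub_one_of_pos (div_pos (add_pos one_pos ht) ht)
  rw [log_div (add_pos one_pos ht).ne' ht.ne', add_div, div_self ht.ne'] at h
  linarith

/-- For a probability distribution `p` on `ℤ` with finite mean absolute deviation
`M = ∑ |n - g|·p_n` from an arbitrary real number `g`, the Shannon entropy satisfies
`H(p) < ln(2M + 1) + 1`.
(The convention `0·ln 0 = 0` holds automatically since `Real.log 0 = 0`.) -/
theorem entropy_lt_log_abs_mean (p : ℤ → ℝ) (hp : ∀ n, 0 ≤ p n) (hsum : HasSum p 1)
    (g : ℝ) (M : ℝ) (hM : HasSum (fun n : ℤ => |(n : ℝ) - g| * p n) M) :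
    (-∑' n : ℤ, p n * Real.log (p n)) < Real.log (2 * M + 1) + 1 := by
  have hM_nonneg : 0 ≤ M := hM.nonneg fun n => mul_nonneg (abs_nonneg _) (hp n)
  have ht : 0 < 2 * M + 1 := by positivity
  calc -∑' n, p n * log (p n)
      = ∑' n, negMulLog (p n) := by simp only [negMulLog, neg_mul, tsum_neg]
    _ < 2 / (2 * M + 1) * M + log (1 + 2 / (2 / (2 * M + 1))) :=
        tsum_negMulLog_lt_mul_add_log_one_add_two_div hp hsum hM (div_pos two_pos ht)
    _ = 2 * M / (2 * M + 1) + log (1 + (2 * M + 1)) := by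
        rw [div_div_cancel₀ two_ne_zero, div_mul_eq_mul_div]
    _ ≤ 2 * M / (2 * M + 1) + (log (2 * M + 1) + 1 / (2 * M + 1)) := by
        gcongr
        exact log_one_add_le_log_add_one_div ht
    _ = log (2 * M + 1) + 1 := by
        field_simp
        ring
end

section
/- Let n_max be a nonnegative integer, let ψ : ℤ → ℂ satisfy ψ_n = 0 unless 0 ≤ n ≤ n_max and ∑_{n∈ℤ} |ψ_n|² = 1, and define the canonical phase probability density on [-π, π] by p(θ) := (2π)^{-1}·|∑_{n∈ℤ} ψ_n e^{inθ}|². Then √(∫_{-π}^{π} θ²·p(θ) dθ) > √(2π/e) / (n_max + 1). -/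
open Real MeasureTheory Complex

/-!
If `ψ` is supported on `N` integers, then by Cauchy–Schwarz the phase density is at most
`N / (2π)`. Among the densities below a given height `M`, the flat one on `[-1/(2M), 1/(2M)]` has
the least second moment, namely `1 / (12 M²)`, so the second moment of the phase density is at least
`π² / (3 N²)`. This beats the entropic bound `2π / (e N²)` because `6 < π e`.
-/

section Bathtub

lemma mul_integral_sub_le_integral_mul {α : Type*} [MeasurableSpace α] {μ : Measure α}
    {w p : α → ℝ} {M : ℝ} (c : ℝ) (hw : Integrable (fun x => max (c - w x) 0) μ)
    (hp : Integrable p μ) (hwp : Integrable (fun x => w x * p x) μ)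
    (hp_nonneg : ∀ᵐ x ∂μ, 0 ≤ p x) (hp_le : ∀ᵐ x ∂μ, p x ≤ M) :
    c * ∫ x, p x ∂μ - M * ∫ x, max (c - w x) 0 ∂μ ≤ ∫ x, w x * p x ∂μ := by
  rw [← integral_const_mul, ← integral_const_mul,
    ← integral_sub (hp.const_mul c) (hw.const_mul M)]
  refine integral_mono_ae ((hp.const_mul c).sub (hw.const_mul M)) hwp ?_
  filter_upwards [hp_nonneg, hp_le] with x h_nonneg h_le
  have : (c - w x) * p x ≤ M * max (c - w x) 0 :=
    calc (c - w x) * p x ≤ max (c - w x) 0 * p x := by gcongr; exact le_max_left _ _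
      _ ≤ max (c - w x) 0 * M := by gcongr
      _ = M * max (c - w x) 0 := mul_comm _ _
  linarith

lemma support_max_sq_sub_sq_subset {a : ℝ} (ha : 0 ≤ a) :
    Function.support (fun x : ℝ => max (a ^ 2 - x ^ 2) 0) ⊆ Set.Ioo (-a) a := by
  intro x hx
  contrapose! hx
  have : a ^ 2 ≤ x ^ 2 := sq_le_sq.2 <| by
    rw [abs_of_nonneg ha]
    exact not_lt.1 fun h => hx (abs_lt.1 h)
  simpa using this

lemma integrable_max_sq_sub_sq {a : ℝ} (ha : 0 ≤ a) :
    Integrable fun x : ℝ => max (a ^ 2 - x ^ 2) 0 :=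
  (by fun_prop : Continuous fun x : ℝ => max (a ^ 2 - x ^ 2) 0).integrable_of_hasCompactSupport <|
    .of_support_subset_isCompact isCompact_Icc <|
      (support_max_sq_sub_sq_subset ha).trans Set.Ioo_subset_Icc_self

lemma integral_max_sq_sub_sq {a : ℝ} (ha : 0 ≤ a) :
    ∫ x : ℝ, max (a ^ 2 - x ^ 2) 0 = 4 / 3 * a ^ 3 :=
  calc ∫ x : ℝ, max (a ^ 2 - x ^ 2) 0
      = ∫ x in (-a)..a, max (a ^ 2 - x ^ 2) 0 :=
        (intervalIntegral.integral_eq_integral_of_support_subset <|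
          (support_max_sq_sub_sq_subset ha).trans Set.Ioo_subset_Ioc_self).symm
    _ = ∫ x in (-a)..a, (a ^ 2 - x ^ 2) := by
        refine intervalIntegral.integral_congr fun x hx => max_eq_left (sub_nonneg.2 ?_)
        rw [Set.uIcc_of_le (by linarith)] at hx
        exact sq_le_sq' hx.1 hx.2
    _ = 4 / 3 * a ^ 3 := by
        rw [intervalIntegral.integral_sub (by simp) (by simp), intervalIntegral.integral_const,
          integral_pow, smul_eq_mul]
        ring

lemma integral_pow_three_div_le_setIntegral_sq_mul {s : Set ℝ} {p : ℝ → ℝ} {M : ℝ} (hM : 0 < M)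
    (hp : IntegrableOn p s) (hp_sq : IntegrableOn (fun x => x ^ 2 * p x) s)
    (hp_nonneg : ∀ᵐ x ∂volume.restrict s, 0 ≤ p x) (hp_le : ∀ᵐ x ∂volume.restrict s, p x ≤ M) :
    (∫ x in s, p x) ^ 3 / (12 * M ^ 2) ≤ ∫ x in s, x ^ 2 * p x := by
  -- The flat profile of height `M` and mass `∫ p` lives on `[-a, a]`.
  set a := (∫ x in s, p x) / (2 * M) with ha_def
  have ha : 0 ≤ a := div_nonneg (integral_nonneg_of_ae hp_nonneg) (by positivity)
  have hmax := integrable_max_sq_sub_sq ha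
  calc (∫ x in s, p x) ^ 3 / (12 * M ^ 2)
      = a ^ 2 * (∫ x in s, p x) - M * ∫ x : ℝ, max (a ^ 2 - x ^ 2) 0 := by
        rw [integral_max_sq_sub_sq ha, ha_def]
        field_simp
        ring
    _ ≤ a ^ 2 * (∫ x in s, p x) - M * ∫ x in s, max (a ^ 2 - x ^ 2) 0 := by
        refine sub_le_sub_left (mul_le_mul_of_nonneg_left ?_ hM.le) _
        exact setIntegral_le_integral hmax (.of_forall fun x => le_max_right _ _)
    _ ≤ ∫ x in s, x ^ 2 * p x :=
        mul_integral_sub_le_integral_mul (a ^ 2) hmax.integrableOn hp hp_sq hp_nonneg hp_le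

end Bathtub

section TrigonometricPolynomials

lemma integral_norm_sum_smul_fourier_sq {T : ℝ} [Fact (0 < T)] (s : Finset ℤ) (c : ℤ → ℂ) :
    ∫ x : AddCircle T, ‖∑ n ∈ s, c n * fourier n x‖ ^ 2 ∂AddCircle.haarAddCircle =
      ∑ n ∈ s, ‖c n‖ ^ 2 := by
  have h := (orthonormal_fourier (T := T)).inner_sum c c s
  simp only [fourierLp, ← map_smul, ← map_sum, ContinuousMap.inner_toLp, Complex.mul_conj',
    Complex.conj_mul', ContinuousMap.sum_apply, ContinuousMap.smul_apply, smul_eq_mul] at h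
  exact_mod_cast h

/-- The trigonometric polynomial `θ ↦ ∑ n ∈ s, c n * e ^ (i n θ)` of a real variable, with
frequencies in `s`; it is the phase amplitude of a state supported on `s`. -/
noncomputable def trigPoly (s : Finset ℤ) (c : ℤ → ℂ) (θ : ℝ) : ℂ :=
  ∑ n ∈ s, c n * Complex.exp ((n : ℂ) * Complex.I * (θ : ℂ))

variable (s : Finset ℤ) (c : ℤ → ℂ)

@[fun_prop]
lemma continuous_trigPoly : Continuous (trigPoly s c) := by
  unfold trigPoly
  fun_prop

lemma integral_norm_trigPoly_sq :
    ∫ θ in (-π)..π, ‖trigPoly s c θ‖ ^ 2 = 2 * π * ∑ n ∈ s, ‖c n‖ ^ 2 := by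
  have : Fact (0 < 2 * π) := ⟨two_pi_pos⟩
  have trigPoly_eq (θ : ℝ) :
      trigPoly s c θ = ∑ n ∈ s, c n * fourier n (θ : AddCircle (2 * π)) := by
    refine Finset.sum_congr rfl fun n _ => ?_
    rw [fourier_coe_apply]
    congr 2
    push_cast
    field_simp
  have interval_eq := AddCircle.intervalIntegral_preimage (2 * π) (-π)
    fun x : AddCircle (2 * π) => ‖∑ n ∈ s, c n * fourier n x‖ ^ 2
  rw [show -π + 2 * π = π by ring] at interval_eq
  simp_rw [trigPoly_eq]
  rw [interval_eq, ← integral_norm_sum_smul_fourier_sq (T := 2 * π),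
    AddCircle.integral_haarAddCircle, smul_eq_mul, mul_inv_cancel_left₀ two_pi_pos.ne']

lemma norm_trigPoly_sq_le (θ : ℝ) :
    ‖trigPoly s c θ‖ ^ 2 ≤ s.card * ∑ n ∈ s, ‖c n‖ ^ 2 := by
  have norm_exp (n : ℤ) : ‖Complex.exp ((n : ℂ) * Complex.I * (θ : ℂ))‖ = 1 := by
    simp [Complex.norm_exp]
  calc ‖trigPoly s c θ‖ ^ 2 ≤ (∑ n ∈ s, ‖c n‖) ^ 2 := by
        gcongr
        exact norm_sum_le_of_le s fun n _ => by rw [norm_mul, norm_exp, mul_one]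
    _ ≤ s.card * ∑ n ∈ s, ‖c n‖ ^ 2 := sq_sum_le_card_mul_sum_sq

variable {s c}

lemma le_integral_sq_mul_norm_trigPoly_sq (hc : ∑ n ∈ s, ‖c n‖ ^ 2 = 1) :
    (2 * π) ^ 3 / (12 * (s.card : ℝ) ^ 2) ≤ ∫ θ in (-π)..π, θ ^ 2 * ‖trigPoly s c θ‖ ^ 2 := by
  have s_nonempty : s.Nonempty :=
    Finset.nonempty_of_sum_ne_zero (by rw [hc]; exact one_ne_zero)
  have le_card (θ : ℝ) : ‖trigPoly s c θ‖ ^ 2 ≤ s.card := by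
    simpa only [hc, mul_one] using norm_trigPoly_sq_le s c θ
  have mass := integral_norm_trigPoly_sq s c
  rw [hc, mul_one, intervalIntegral.integral_of_le (by linarith [pi_pos])] at mass
  rw [← mass, intervalIntegral.integral_of_le (by linarith [pi_pos])]
  exact integral_pow_three_div_le_setIntegral_sq_mul (by exact_mod_cast s_nonempty.card_pos)
    (by fun_prop : Continuous fun θ => ‖trigPoly s c θ‖ ^ 2).integrableOn_Ioc
    (by fun_prop : Continuous fun θ => θ ^ 2 * ‖trigPoly s c θ‖ ^ 2).integrableOn_Ioc
    (.of_forall fun θ => by positivity) (.of_forall le_card)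

end TrigonometricPolynomials

theorem canonical_phase_bound_finite_range_general (s : Finset ℤ) (ψ : ℤ → ℂ)
    (hsupp : ∀ n : ℤ, ψ n ≠ 0 → n ∈ s) (hnorm : HasSum (fun n : ℤ => ‖ψ n‖ ^ 2) 1) :
    π / √3 / s.card ≤ √(∫ θ in (-π)..π,
      θ ^ 2 * (‖∑' n : ℤ, ψ n * Complex.exp ((n : ℂ) * Complex.I * (θ : ℂ))‖ ^ 2 / (2 * π))) := by
  have ψ_eq_zero (n : ℤ) (hn : n ∉ s) : ψ n = 0 := not_not.1 (mt (hsupp n) hn)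
  have sum_eq_one : ∑ n ∈ s, ‖ψ n‖ ^ 2 = 1 := by
    rw [← hnorm.tsum_eq, tsum_eq_sum fun n hn => by simp [ψ_eq_zero n hn]]
  have amplitude_eq (θ : ℝ) :
      ∑' n : ℤ, ψ n * Complex.exp ((n : ℂ) * Complex.I * (θ : ℂ)) = trigPoly s ψ θ :=
    tsum_eq_sum fun n hn => by simp [ψ_eq_zero n hn]
  simp_rw [amplitude_eq, ← mul_div_assoc]
  rw [intervalIntegral.integral_div]
  refine Real.le_sqrt_of_sq_le ?_
  calc (π / √3 / s.card) ^ 2 = (2 * π) ^ 3 / (12 * (s.card : ℝ) ^ 2) / (2 * π) := by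
        rw [div_pow, div_pow, sq_sqrt zero_le_three]
        field_simp
        norm_num
    _ ≤ (∫ θ in (-π)..π, θ ^ 2 * ‖trigPoly s ψ θ‖ ^ 2) / (2 * π) := by
        gcongr
        exact le_integral_sq_mul_norm_trigPoly_sq sum_eq_one

lemma sqrt_two_pi_div_exp_one_lt : √(2 * π / Real.exp 1) < π / √3 := by
  have six_lt : 3 * 2 < π * Real.exp 1 :=
    mul_lt_mul'' pi_gt_three (by linarith [Real.exp_one_gt_d9]) (by norm_num) (by norm_num)
  rw [Real.sqrt_lt' (by positivity), div_pow, sq_sqrt zero_le_three,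
    div_lt_div_iff₀ (Real.exp_pos 1) three_pos]
  nlinarith [pi_pos]

/-- Heisenberg-type bound for a generator with eigenvalues confined to `{0, …, n_max}`.
For a unit vector `ψ` supported on `{0, …, n_max}`, the canonical phase probability
density `p(θ) = (2π)⁻¹ ‖∑ₙ ψ_n e^{inθ}‖²` satisfies
`√(∫ θ² p(θ) dθ) > √(2π/e)/(n_max + 1)`. -/
theorem canonical_phase_bound_finite_range (nmax : ℕ) (ψ : ℤ → ℂ)
    (hsupp : ∀ n : ℤ, ψ n ≠ 0 → 0 ≤ n ∧ n ≤ (nmax : ℤ))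
    (hnorm : HasSum (fun n : ℤ => ‖ψ n‖ ^ 2) 1) :
    Real.sqrt (∫ θ in (-Real.pi)..Real.pi,
        θ ^ 2 * (‖∑' n : ℤ, ψ n * Complex.exp ((n : ℂ) * Complex.I * (θ : ℂ))‖ ^ 2
          / (2 * Real.pi)))
      > Real.sqrt (2 * Real.pi / Real.exp 1) / ((nmax : ℝ) + 1) := by
  refine (div_lt_div_of_pos_right sqrt_two_pi_div_exp_one_lt (by positivity)).trans_le ?_
  simpa using canonical_phase_bound_finite_range_general (Finset.Icc 0 (nmax : ℤ)) ψ
    (fun n hn => Finset.mem_Icc.2 (hsupp n hn)) hnorm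
end

section
/- Let n be a nonnegative integer and let ψ : {0, 1, …, n} → ℂ satisfy ∑_{k=0}^{n} |ψ_k|² = 1. Then |∑_{k=0}^{n-1} ψ_{k+1}·conj(ψ_k)| ≤ cos(π/(n+2)). -/
open Real Complex

/-!
By the triangle and Cauchy–Schwarz inequalities it suffices to bound the quadratic form
`∑ a_{k+1} a_k` of a path with `n + 1` vertices. Its Perron eigenvector comes from
`v_k = sin (kπ/(n+2))`, which vanishes at `k = 0` and `k = n + 2`, is positive in between, and
satisfies `v_k + v_{k+2} = 2 cos (π/(n+2)) v_{k+1}`. In the sum of the weighted inequalities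
`2 a_{k+1} a_k ≤ (v_{k+2}/v_{k+1}) a_k² + (v_{k+1}/v_{k+2}) a_{k+1}²` the coefficient of each
`a_k²` is at most `(v_k + v_{k+2})/v_{k+1} = 2 cos (π/(n+2))`.
-/

section PathQuadraticForm

variable {K : Type*} [Field K] [LinearOrder K] [IsStrictOrderedRing K]

lemma two_mul_mul_le_div_mul_sq_add_div_mul_sq {p q : K} (hp : 0 < p) (hq : 0 < q) (a b : K) :
    2 * (b * a) ≤ q / p * a ^ 2 + p / q * b ^ 2 := by
  simpa only [inv_div, mul_assoc, mul_comm a b] using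
    two_mul_le_add_mul_sq (a := a) (b := b) (div_pos hq hp)

lemma sum_div_mul_sq_add_div_mul_sq_succ_le {v : ℕ → K} {n : ℕ} (hzero : 0 ≤ v 0)
    (hpos : ∀ k ≤ n, 0 < v (k + 1)) (hlast : 0 ≤ v (n + 2)) (a : ℕ → K) :
    ∑ k ∈ Finset.range n,
        (v (k + 2) / v (k + 1) * a k ^ 2 + v (k + 1) / v (k + 2) * a (k + 1) ^ 2)
      ≤ ∑ k ∈ Finset.range (n + 1), (v k + v (k + 2)) / v (k + 1) * a k ^ 2 := by
  have hleft : 0 ≤ v 0 / v 1 * a 0 ^ 2 :=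
    mul_nonneg (div_nonneg hzero (hpos 0 n.zero_le).le) (sq_nonneg _)
  have hright : 0 ≤ v (n + 2) / v (n + 1) * a n ^ 2 :=
    mul_nonneg (div_nonneg hlast (hpos n le_rfl).le) (sq_nonneg _)
  simp only [add_div, add_mul, Finset.sum_add_distrib]
  rw [Finset.sum_range_succ' (fun k ↦ v k / v (k + 1) * a k ^ 2),
    Finset.sum_range_succ (fun k ↦ v (k + 2) / v (k + 1) * a k ^ 2)]
  linarith

/-- The index of `v` is shifted by one: `v (k + 1)` sits at vertex `k`, so `v 0` and `v (n + 2)` are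
values just outside the path. -/
lemma two_mul_sum_succ_mul_le_of_add_le_mul {v : ℕ → K} {c : K} {n : ℕ} (hzero : 0 ≤ v 0)
    (hpos : ∀ k ≤ n, 0 < v (k + 1)) (hlast : 0 ≤ v (n + 2))
    (hsuper : ∀ k ≤ n, v k + v (k + 2) ≤ c * v (k + 1)) (a : ℕ → K) :
    2 * ∑ k ∈ Finset.range n, a (k + 1) * a k ≤ c * ∑ k ∈ Finset.range (n + 1), a k ^ 2 :=
  calc
    2 * ∑ k ∈ Finset.range n, a (k + 1) * a k
      ≤ ∑ k ∈ Finset.range n,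
          (v (k + 2) / v (k + 1) * a k ^ 2 + v (k + 1) / v (k + 2) * a (k + 1) ^ 2) := by
        rw [Finset.mul_sum]
        refine Finset.sum_le_sum fun k hk ↦ ?_
        have hkn : k < n := Finset.mem_range.mp hk
        exact two_mul_mul_le_div_mul_sq_add_div_mul_sq (hpos k hkn.le) (hpos (k + 1) hkn) _ _
    _ ≤ ∑ k ∈ Finset.range (n + 1), (v k + v (k + 2)) / v (k + 1) * a k ^ 2 :=
        sum_div_mul_sq_add_div_mul_sq_succ_le hzero hpos hlast a
    _ ≤ c * ∑ k ∈ Finset.range (n + 1), a k ^ 2 := by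
        rw [Finset.mul_sum]
        refine Finset.sum_le_sum fun k hk ↦ ?_
        have hkn : k ≤ n := Finset.mem_range_succ_iff.mp hk
        exact mul_le_mul_of_nonneg_right ((div_le_iff₀ (hpos k hkn)).mpr (hsuper k hkn))
          (sq_nonneg _)

end PathQuadraticForm

lemma sin_mul_pi_div_pos {x y : ℝ} (hx : 0 < x) (hxy : x < y) : 0 < Real.sin (x * (π / y)) := by
  have hy : 0 < y := hx.trans hxy
  refine Real.sin_pos_of_pos_of_lt_pi (by positivity) ?_
  calc
    x * (π / y) < y * (π / y) := by gcongr
    _ = π := mul_div_cancel₀ π hy.ne'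

lemma sin_mul_add_sin_add_two_mul (x θ : ℝ) :
    Real.sin (x * θ) + Real.sin ((x + 2) * θ) = 2 * Real.cos θ * Real.sin ((x + 1) * θ) := by
  have h := Real.two_mul_sin_mul_cos ((x + 1) * θ) θ
  ring_nf at h ⊢
  exact h.symm

lemma sum_succ_mul_le_cos_mul_sum_sq (n : ℕ) (a : ℕ → ℝ) :
    ∑ k ∈ Finset.range n, a (k + 1) * a k
      ≤ Real.cos (π / (n + 2)) * ∑ k ∈ Finset.range (n + 1), a k ^ 2 := by
  set θ : ℝ := π / (n + 2) with hθ
  have hpos : ∀ k ≤ n, 0 < Real.sin ((k + 1 : ℕ) * θ) := fun k hk ↦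
    sin_mul_pi_div_pos (by positivity) (by norm_cast; omega)
  have hlast : Real.sin ((n + 2 : ℕ) * θ) = 0 := by
    rw [hθ, Nat.cast_add, Nat.cast_two, mul_div_cancel₀ _ (by positivity), Real.sin_pi]
  have hrec : ∀ k : ℕ, Real.sin (k * θ) + Real.sin ((k + 2 : ℕ) * θ)
      = 2 * Real.cos θ * Real.sin ((k + 1 : ℕ) * θ) := fun k ↦ by
    simpa using sin_mul_add_sin_add_two_mul k θ
  have hbound := two_mul_sum_succ_mul_le_of_add_le_mul (v := fun k ↦ Real.sin (k * θ))
    (by simp) hpos hlast.ge (fun k _ ↦ (hrec k).le) a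
  linarith

theorem canonical_mean_le_cos_general {𝕜 E : Type*} [RCLike 𝕜] [SeminormedAddCommGroup E]
    [InnerProductSpace 𝕜 E] (n : ℕ) (ψ : ℕ → E) :
    ‖∑ k ∈ Finset.range n, inner 𝕜 (ψ k) (ψ (k + 1))‖
      ≤ Real.cos (π / (n + 2)) * ∑ k ∈ Finset.range (n + 1), ‖ψ k‖ ^ 2 :=
  calc
    ‖∑ k ∈ Finset.range n, inner 𝕜 (ψ k) (ψ (k + 1))‖
      ≤ ∑ k ∈ Finset.range n, ‖ψ (k + 1)‖ * ‖ψ k‖ :=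
        norm_sum_le_of_le _ fun _ _ ↦ (norm_inner_le_norm _ _).trans_eq (mul_comm _ _)
    _ ≤ Real.cos (π / (n + 2)) * ∑ k ∈ Finset.range (n + 1), ‖ψ k‖ ^ 2 :=
        sum_succ_mul_le_cos_mul_sum_sq n fun k ↦ ‖ψ k‖

/-- For a state `ψ` with number support `{0, …, n}` and unit norm, the canonical mean
`|⟨e^{iΘ}⟩| = |∑_{k=0}^{n-1} ψ_{k+1} conj(ψ_k)|` is at most `cos (π/(n+2))`. -/
theorem canonical_mean_le_cos (n : ℕ) (ψ : ℕ → ℂ)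
    (hnorm : ∑ k ∈ Finset.range (n + 1), ‖ψ k‖ ^ 2 = 1) :
    ‖∑ k ∈ Finset.range n, ψ (k + 1) * (starRingEnd ℂ) (ψ k)‖
      ≤ Real.cos (Real.pi / ((n : ℝ) + 2)) := by
  simpa only [hnorm, mul_one, RCLike.inner_apply] using canonical_mean_le_cos_general (𝕜 := ℂ) n ψ
end

section
/- Let ψ : ℤ → ℂ satisfy ∑_{n∈ℤ} |ψ_n|² = 1 and suppose A := ∑_{n∈ℤ} |n|·|ψ_n|² is finite. Then for every real ε, the quantity c := |∑_{n∈ℤ} |ψ_n|²·e^{-inε}| satisfies 2·√(1 - c²) ≤ 2·√(2·A·|ε|). -/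
open Real Complex

/-!
The phases satisfy `|e^{ix} - 1| ≤ |x|`, so averaging against the weights `|ψ_n|²` puts the overlap
within `A|ε|` of `1`, whence `1 - c ≤ A|ε|`. Finally `1 - c² = 2(1 - c) - (1 - c)² ≤ 2(1 - c)`.
-/

lemma norm_sub_tsum_exp_smul_le {ι E : Type*} [NormedAddCommGroup E] [NormedSpace ℂ E]
    [CompleteSpace E] {w : ι → E} {s : E} (hw : HasSum w s) {x : ι → ℝ} {M : ℝ}
    (hM : HasSum (fun i => |x i| * ‖w i‖) M) :
    ‖s - ∑' i, Complex.exp (I * x i) • w i‖ ≤ M := by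
  have hbound (i : ι) : ‖Complex.exp (I * x i) • w i - w i‖ ≤ |x i| * ‖w i‖ :=
    calc ‖Complex.exp (I * x i) • w i - w i‖
        = ‖Complex.exp (I * x i) - 1‖ * ‖w i‖ := by rw [← norm_smul, sub_smul, one_smul]
      _ ≤ |x i| * ‖w i‖ := by gcongr; exact norm_exp_I_mul_ofReal_sub_one_le
  have hdiff : Summable fun i => Complex.exp (I * x i) • w i - w i :=
    .of_norm_bounded hM.summable hbound
  have hphased : Summable fun i => Complex.exp (I * x i) • w i := by
    simpa only [sub_add_cancel] using hdiff.add hw.summable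
  rw [norm_sub_rev, ← (hphased.hasSum.sub hw).tsum_eq]
  exact tsum_of_norm_bounded hM hbound

lemma norm_one_sub_tsum_norm_sq_mul_exp_le {ι : Type*} {ψ : ι → ℂ}
    (hnorm : HasSum (fun i => ‖ψ i‖ ^ 2) 1) {G : ι → ℝ} {A : ℝ}
    (hA : HasSum (fun i => |G i| * ‖ψ i‖ ^ 2) A) (ε : ℝ) :
    ‖1 - ∑' i, (‖ψ i‖ ^ 2 : ℂ) * Complex.exp (-(G i : ℂ) * I * (ε : ℂ))‖ ≤ A * |ε| := by
  have hweights : HasSum (fun i => (‖ψ i‖ ^ 2 : ℂ)) 1 := by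
    simpa using hasSum_ofReal.mpr hnorm
  have hmean : HasSum (fun i => |-(G i * ε)| * ‖(‖ψ i‖ ^ 2 : ℂ)‖) (A * |ε|) := by
    simpa [abs_mul, mul_right_comm] using hA.mul_right |ε|
  have hphase (i : ι) : (‖ψ i‖ ^ 2 : ℂ) * Complex.exp (-(G i : ℂ) * I * (ε : ℂ)) =
      Complex.exp (I * (-(G i * ε) : ℝ)) • (‖ψ i‖ ^ 2 : ℂ) := by
    rw [smul_eq_mul, mul_comm]
    push_cast
    ring_nf
  simp only [hphase]
  exact norm_sub_tsum_exp_smul_le hweights hmean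

/-- The generator is diagonal on `ℓ²(ι)`, with arbitrary real eigenvalues `G i`. -/
theorem trace_distance_le_general {ι : Type*} {ψ : ι → ℂ}
    (hnorm : HasSum (fun i => ‖ψ i‖ ^ 2) 1) {G : ι → ℝ} {A : ℝ}
    (hA : HasSum (fun i => |G i| * ‖ψ i‖ ^ 2) A) (ε : ℝ) :
    2 * √(1 - ‖∑' i, (‖ψ i‖ ^ 2 : ℂ) * Complex.exp (-(G i : ℂ) * I * (ε : ℂ))‖ ^ 2) ≤
      2 * √(2 * A * |ε|) := by
  set z := ∑' i, (‖ψ i‖ ^ 2 : ℂ) * Complex.exp (-(G i : ℂ) * I * (ε : ℂ))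
  have hdist : 1 - ‖z‖ ≤ A * |ε| :=
    calc 1 - ‖z‖ = ‖(1 : ℂ)‖ - ‖z‖ := by rw [norm_one]
      _ ≤ ‖1 - z‖ := norm_sub_norm_le 1 z
      _ ≤ A * |ε| := norm_one_sub_tsum_norm_sq_mul_exp_le hnorm hA ε
  gcongr
  calc 1 - ‖z‖ ^ 2 = 2 * (1 - ‖z‖) - (1 - ‖z‖) ^ 2 := by ring
    _ ≤ 2 * (1 - ‖z‖) := sub_le_self _ (sq_nonneg _)
    _ ≤ 2 * A * |ε| := by linarith

/-- For a unit vector `ψ ∈ ℓ²(ℤ)` with finite `⟨|G|⟩ = A = ∑ |n| |ψ_n|²`, the trace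
distance `2√(1 - c²)` between `|ψ⟩⟨ψ|` and its phase-shifted image, where
`c = |∑ |ψ_n|² e^{-inε}|`, is at most `2√(2·A·|ε|)`. -/
theorem trace_distance_le (ψ : ℤ → ℂ)
    (hnorm : HasSum (fun n : ℤ => ‖ψ n‖ ^ 2) 1)
    (A : ℝ) (hA : HasSum (fun n : ℤ => |(n : ℝ)| * ‖ψ n‖ ^ 2) A) (ε : ℝ)
    (c : ℝ)
    (hc : c = ‖∑' n : ℤ, (‖ψ n‖ ^ 2 : ℂ) * Complex.exp (-(n : ℂ) * Complex.I * (ε : ℂ))‖) :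
    2 * Real.sqrt (1 - c ^ 2) ≤ 2 * Real.sqrt (2 * A * |ε|) := by
  subst hc
  exact mod_cast trace_distance_le_general hnorm hA ε
end

section
/- Let μ be a probability measure supported on the interval [-π, π] such that ∫ sin θ dμ(θ) = 0 and c := ∫ cos θ dμ(θ) > 0, and define the Holevo variance V := c^{-2} - 1. Then ∫ θ² dμ(θ) ≥ (arccos((V+1)^{-1/2}))². -/
open Real MeasureTheory

/-!
The function `arccos²` is convex on `[-1, 1]`: at `cos t` its derivative is `-2 t / sin t`, and
`t / sin t` increases on `(0, π)` because `sin` is concave there. Jensen's inequality for the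
variable `cos X` then gives `arccos (𝔼 cos X) ^ 2 ≤ 𝔼 (arccos (cos X) ^ 2)`, and
`arccos (cos X) ≤ |X|` since `arccos (cos X)` is the distance from `X` to `2πℤ`.
-/

theorem monotoneOn_div_sin_Ioo : MonotoneOn (fun t ↦ t / sin t) (Set.Ioo 0 π) := by
  intro s hs t ht hst
  have sin_div_le : sin t / t ≤ sin s / s := by
    have slope_le := strictConcaveOn_sin_Icc.concaveOn.slope_anti (Set.left_mem_Icc.2 pi_pos.le)
      ⟨Set.Ioo_subset_Icc_self hs, hs.1.ne'⟩ ⟨Set.Ioo_subset_Icc_self ht, ht.1.ne'⟩ hst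
    simpa [slope_def_field] using slope_le
  simpa using inv_anti₀ (div_pos (sin_pos_of_mem_Ioo ht) ht.1) sin_div_le

theorem arccos_mem_Ioo {x : ℝ} (hx : x ∈ Set.Ioo (-1) 1) : arccos x ∈ Set.Ioo 0 π :=
  ⟨arccos_pos.2 hx.2, arccos_lt_pi.2 hx.1⟩

theorem hasDerivAt_arccos_sq {x : ℝ} (hx : x ∈ Set.Ioo (-1) 1) :
    HasDerivAt (fun y ↦ arccos y ^ 2) (-2 * (arccos x / sin (arccos x))) x := by
  refine ((hasDerivAt_arccos hx.1.ne' hx.2.ne).pow 2).congr_deriv ?_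
  rw [sin_arccos]
  ring

theorem convexOn_arccos_sq : ConvexOn ℝ (Set.Icc (-1) 1) fun x ↦ arccos x ^ 2 := by
  refine MonotoneOn.convexOn_of_deriv (convex_Icc _ _) (by fun_prop) ?_ ?_ <;>
    rw [interior_Icc]
  · exact fun x hx ↦ (hasDerivAt_arccos_sq hx).differentiableAt.differentiableWithinAt
  · intro x hx y hy hxy
    rw [(hasDerivAt_arccos_sq hx).deriv, (hasDerivAt_arccos_sq hy).deriv]
    exact mul_le_mul_of_nonpos_left
      (monotoneOn_div_sin_Ioo (arccos_mem_Ioo hy) (arccos_mem_Ioo hx) (arccos_le_arccos hxy))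
      (by norm_num)

theorem arccos_cos_le_abs (t : ℝ) : arccos (cos t) ≤ |t| := by
  rcases le_total |t| π with ht | ht
  · rw [← cos_abs, arccos_cos (abs_nonneg t) ht]
  · exact (arccos_le_pi _).trans ht

theorem arccos_cos_sq_le_sq (t : ℝ) : arccos (cos t) ^ 2 ≤ t ^ 2 := by
  rw [← sq_abs t]
  exact pow_le_pow_left₀ (arccos_nonneg _) (arccos_cos_le_abs t) 2

section Jensen

variable {Ω : Type*} {mΩ : MeasurableSpace Ω} {μ : Measure Ω} [IsProbabilityMeasure μ]

theorem arccos_integral_sq_le {Y : Ω → ℝ} (hY : AEStronglyMeasurable Y μ)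
    (hY_mem : ∀ᵐ ω ∂μ, Y ω ∈ Set.Icc (-1) 1) :
    arccos (∫ ω, Y ω ∂μ) ^ 2 ≤ ∫ ω, arccos (Y ω) ^ 2 ∂μ := by
  have arccos_memLp : MemLp (fun ω ↦ arccos (Y ω)) 2 μ :=
    memLp_of_bounded (.of_forall fun ω ↦ ⟨arccos_nonneg (Y ω), arccos_le_pi (Y ω)⟩)
      (continuous_arccos.comp_aestronglyMeasurable hY) 2
  exact convexOn_arccos_sq.map_integral_le (by fun_prop) isClosed_Icc hY_mem
    (.of_mem_Icc (-1) 1 hY.aemeasurable hY_mem) arccos_memLp.integrable_sq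

theorem integral_sq_ge_arccos_sq_of_holevo_general {X : Ω → ℝ} (hX : MemLp X 2 μ) :
    arccos (∫ ω, cos (X ω) ∂μ) ^ 2 ≤ ∫ ω, X ω ^ 2 ∂μ :=
  calc arccos (∫ ω, cos (X ω) ∂μ) ^ 2
      ≤ ∫ ω, arccos (cos (X ω)) ^ 2 ∂μ :=
        arccos_integral_sq_le (continuous_cos.comp_aestronglyMeasurable hX.aestronglyMeasurable)
          (.of_forall fun ω ↦ cos_mem_Icc (X ω))
    _ ≤ ∫ ω, X ω ^ 2 ∂μ :=
        integral_mono_of_nonneg (.of_forall fun _ ↦ sq_nonneg _) hX.integrable_sq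
          (.of_forall fun ω ↦ arccos_cos_sq_le_sq (X ω))

end Jensen

theorem one_div_sqrt_one_div_sq_sub_one_add_one {c : ℝ} (hc : 0 ≤ c) :
    1 / √(1 / c ^ 2 - 1 + 1) = c := by
  rw [sub_add_cancel, sqrt_div zero_le_one, sqrt_one, sqrt_sq hc, one_div_one_div]

/-- For an unbiased phase-error distribution `μ` supported on `[-π, π]`
(`∫ sin θ dμ = 0`, `c := ∫ cos θ dμ > 0`) with Holevo variance `V := c⁻² - 1`,
one has `∫ θ² dμ ≥ (arccos ((V+1)^{-1/2}))²`. -/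
theorem integral_sq_ge_arccos_sq_of_holevo (μ : Measure ℝ) [IsProbabilityMeasure μ]
    (hsupp : ∀ᵐ θ ∂μ, θ ∈ Set.Icc (-Real.pi) Real.pi)
    (hsin : (∫ θ, Real.sin θ ∂μ) = 0)
    (c : ℝ) (hc : c = ∫ θ, Real.cos θ ∂μ) (hcpos : 0 < c)
    (V : ℝ) (hV : V = 1 / c ^ 2 - 1) :
    (∫ θ, θ ^ 2 ∂μ) ≥ Real.arccos (1 / Real.sqrt (V + 1)) ^ 2 := by
  rw [hV, one_div_sqrt_one_div_sq_sub_one_add_one hcpos.le, hc]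
  exact integral_sq_ge_arccos_sq_of_holevo_general
    (memLp_of_bounded hsupp aestronglyMeasurable_id 2)
end
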